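/- For ℓ ≥ 1 and k ≥ 3, (f_{ℓ−1}^{(k−1)} − 1)/2 ≤ r_ℓ^{(k)} ≤ (f_{ℓ−1}^{(k−1)} + 1)/2; equivalently |2·r_ℓ^{(k)} − f_{ℓ−1}^{(k−1)}| ≤ 1, where r_ℓ^{(k)} counts binary strings of length ℓ starting with 0, ending with 1, avoiding 0^k and 1^k as factors, and f^{(k−1)} is the (k−1)-generalized Fibonacci sequence. -/

import Mathlib

open List

/-- `w` avoids `p` as a consecutive factor. -/
def Avoids (p w : List Bool) : Prop := ¬ p <:+: w

/-- The set `V^{i,(k)}` of binary strings `1^k 0 u 1 0^k` of length `i`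
where `0u1` avoids `0^k` and `1^k` as factors (`true` plays the role of `1`). -/
def Vik (k i : ℕ) : Set (List Bool) :=
  {w | ∃ u : List Bool,
      w = List.replicate k true ++ ([false] ++ u ++ [true]) ++ List.replicate k false ∧
      w.length = i ∧
      Avoids (List.replicate k false) ([false] ++ u ++ [true]) ∧
      Avoids (List.replicate k true) ([false] ++ u ++ [true])}

/-- `u` and `v` are non-overlapping (in the direction prefix-of-`u` /
suffix-of-`v`): no proper nonempty prefix of `u` equals a proper nonempty
suffix of `v`. -/
def CrossBF (u v : List Bool) : Prop :=
  ∀ p : List Bool, p ≠ [] → p ≠ u → p ≠ v → ¬(p <+: u ∧ p <:+ v)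

/-- `R_ℓ(0^k,1^k)`: binary strings of length `ℓ` starting with `0`, ending with
`1`, avoiding `0^k` and `1^k` as factors. -/
def Rset (k ℓ : ℕ) : Set (List Bool) :=
  {w | w.length = ℓ ∧ w.head? = some false ∧ w.getLast? = some true ∧
       Avoids (List.replicate k false) w ∧ Avoids (List.replicate k true) w}

/-!
Fix the last letter `1`, avoid runs of length `k`, and build words from the left, remembering the
current run. If `C n r b` is the number of ways to finish in `n` letters from a run of `r` letters
`b`, then `C (n + 1) r b = C n (r + 1) b + C n 1 (!b)` for `r < k`, and `C n k b = 0`. The sum of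
`C n 1 b` over `b` then satisfies the generalized Fibonacci recurrence, whereas in
`C n r 0 - C n r 1` almost everything cancels: it equals `[k ∣ n + r] - [k ∣ n]`. The number sought
is `C (ℓ - 1) 1 0`, half the sum plus half the difference. In terms of run lengths, the difference
is an alternating count of compositions with parts less than `k`, whose generating function is
`1 / (1 + x + ⋯ + x ^ (k - 1)) = (1 - x) / (1 - x ^ k)`.
-/

theorem replicate_infix_replicate_append_cons_iff {α : Type*} {a b c : α} {k r : ℕ} {w : List α}
    (hab : a ≠ b) (hr : r < k) :
    replicate k c <:+: replicate r b ++ a :: w ↔ replicate k c <:+: a :: w := by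
  induction r with
  | zero => simp
  | succ r ih =>
    have not_prefix : ¬ replicate k c <+: replicate (r + 1) b ++ a :: w := by
      intro h
      have hb : c = b := by
        have := h.getElem (i := 0) (by simp only [length_replicate]; omega)
        simpa using this
      have ha : c = a := by
        have := h.getElem (i := r + 1) (by simpa only [length_replicate] using hr)
        simpa using this
      exact hab (ha.symm.trans hb)
    rw [replicate_succ, cons_append] at not_prefix ⊢
    rw [infix_cons_iff, or_iff_right not_prefix, ih (by omega)]

/-- The words of length `n` that extend the prefix `u` to a word ending in `1` and avoiding
`0^k` and `1^k`. -/
def completions (k : ℕ) (u : List Bool) (n : ℕ) : Set (List Bool) :=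
  {w | w.length = n ∧ (u ++ w).getLast? = some true ∧ ∀ c, Avoids (replicate k c) (u ++ w)}

section Completions

variable {k r : ℕ} {a b : Bool} (u : List Bool) (n : ℕ)

theorem finite_completions : (completions k u n).Finite :=
  (List.finite_length_eq Bool n).subset fun _ hw ↦ hw.1

theorem cons_mem_completions_iff {w : List Bool} :
    a :: w ∈ completions k u (n + 1) ↔ w ∈ completions k (u ++ [a]) n := by
  simp [completions]

theorem completions_succ :
    completions k u (n + 1) =
      cons b '' completions k (u ++ [b]) n ∪ cons (!b) '' completions k (u ++ [!b]) n := by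
  ext w
  cases w with
  | nil => simp [completions]
  | cons a w =>
    rw [cons_mem_completions_iff]
    obtain rfl | rfl := Bool.eq_or_eq_not a b <;> simp

theorem ncard_completions_succ (b : Bool) :
    (completions k u (n + 1)).ncard =
      (completions k (u ++ [b]) n).ncard + (completions k (u ++ [!b]) n).ncard := by
  have disjoint : Disjoint (cons b '' completions k (u ++ [b]) n)
      (cons (!b) '' completions k (u ++ [!b]) n) := by
    rw [Set.disjoint_left]
    rintro _ ⟨v, -, rfl⟩ ⟨w, -, h⟩
    simp at h
  rw [completions_succ, Set.ncard_union_eq disjoint ((finite_completions _ n).image _)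
    ((finite_completions _ n).image _), Set.ncard_image_of_injective _ cons_injective,
    Set.ncard_image_of_injective _ cons_injective]

theorem completions_replicate_append_singleton (hab : a ≠ b) (hr : r < k) :
    completions k (replicate r b ++ [a]) n = completions k [a] n := by
  ext w
  simp [completions, Avoids, replicate_infix_replicate_append_cons_iff hab hr, getLast?_cons]

end Completions

/-- The number of ways to continue a run of `r` letters `b` by `n` letters to a word ending in `1`
and avoiding `0^k` and `1^k`. -/
noncomputable def completionCount (k n r : ℕ) (b : Bool) : ℕ :=
  (completions k (replicate r b) n).ncard

section CompletionCount

variable {k n r : ℕ}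

theorem completionCount_zero (b : Bool) (hr : 0 < r) (hrk : r < k) :
    completionCount k 0 r b = b.toNat := by
  have avoids (c : Bool) : Avoids (replicate k c) (replicate r b) := fun h ↦ by
    simpa [hrk.not_ge] using h.length_le
  have eq_nil : completions k (replicate r b) 0 = {w | w = [] ∧ b = true} := by
    ext w
    simp only [completions, Set.mem_ofPred_eq, length_eq_zero_iff]
    refine and_congr_right ?_
    rintro rfl
    simp only [append_nil, getLast?_replicate, hr.ne', if_false, Option.some.injEq, avoids,
      implies_true, and_true]
  rw [completionCount, eq_nil]
  cases b <;> simp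

theorem completionCount_self (b : Bool) : completionCount k n k b = 0 := by
  have empty : completions k (replicate k b) n = ∅ :=
    Set.eq_empty_of_forall_notMem fun w hw ↦ hw.2.2 b (prefix_append _ w).isInfix
  rw [completionCount, empty, Set.ncard_empty]

theorem completionCount_succ (b : Bool) (hrk : r < k) :
    completionCount k (n + 1) r b = completionCount k n (r + 1) b + completionCount k n 1 (!b) := by
  simp only [completionCount]
  rw [ncard_completions_succ _ _ b, replicate_succ',
    completions_replicate_append_singleton n (Bool.not_ne_self b) hrk, replicate_one]

theorem completionCount_false_sub_true (hr : 0 < r) (hrk : r ≤ k) :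
    (completionCount k n r false : ℤ) - completionCount k n r true =
      (if k ∣ n + r then 1 else 0) - (if k ∣ n then 1 else 0) := by
  induction n generalizing r with
  | zero =>
    obtain rfl | hlt := hrk.eq_or_lt
    · simp [completionCount_self]
    · simp [completionCount_zero _ hr hlt, Nat.not_dvd_of_pos_of_lt hr hlt]
  | succ n ih =>
    obtain rfl | hlt := hrk.eq_or_lt
    · simp [completionCount_self]
    · have longer_run := ih r.succ_pos hlt
      have new_run := ih one_pos (by omega)
      rw [completionCount_succ _ hlt, completionCount_succ _ hlt, Bool.not_false, Bool.not_true,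
        add_assoc n 1 r, add_comm 1 r]
      push_cast
      linarith

theorem sum_completionCount_succ (hrk : r < k) :
    ∑ b, completionCount k (n + 1) r b =
      ∑ b, completionCount k n (r + 1) b + ∑ b, completionCount k n 1 b := by
  simp only [completionCount_succ _ hrk, Fintype.sum_bool, Bool.not_true, Bool.not_false]
  ring

theorem sum_completionCount_of_add_lt (hr : 0 < r) (h : n + r < k) :
    ∑ b, completionCount k n r b = 2 ^ n := by
  induction n generalizing r with
  | zero => simp [completionCount_zero _ hr (by omega : r < k)]
  | succ n ih =>
    rw [sum_completionCount_succ (by omega), ih r.succ_pos (by omega), ih one_pos (by omega),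
      pow_succ, mul_two]

theorem sum_completionCount_of_le_add (hrk : r ≤ k) (h : k ≤ n + r) :
    ∑ b, completionCount k n r b =
      ∑ i ∈ Finset.range (k - r), ∑ b, completionCount k (n - 1 - i) 1 b := by
  induction n generalizing r with
  | zero =>
    obtain rfl : r = k := by omega
    simp [completionCount_self]
  | succ n ih =>
    obtain rfl | hlt := hrk.eq_or_lt
    · simp [completionCount_self]
    · rw [sum_completionCount_succ hlt, ih hlt (by omega),
        show k - r = k - (r + 1) + 1 by omega, Finset.sum_range_succ']
      simp only [Nat.add_sub_cancel, Nat.sub_zero, Nat.sub_sub, Nat.add_comm 1]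

theorem eq_sum_completionCount_of_recurrence (hk : 0 < k) {f : ℕ → ℕ}
    (hf1 : ∀ j : ℕ, j < k - 1 → f j = 2 ^ j)
    (hf2 : ∀ j : ℕ, k - 1 ≤ j → f j = ∑ i ∈ Finset.range (k - 1), f (j - 1 - i)) (n : ℕ) :
    f n = ∑ b, completionCount k n 1 b := by
  induction n using Nat.strong_induction_on with
  | _ n ih =>
    obtain h | h := lt_or_ge n (k - 1)
    · rw [hf1 n h, sum_completionCount_of_add_lt one_pos (by omega)]
    · rw [hf2 n h, sum_completionCount_of_le_add hk (by omega)]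
      refine Finset.sum_congr rfl fun i hi ↦ ih _ ?_
      have := Finset.mem_range.mp hi
      omega

end CompletionCount

theorem Rset_succ (k n : ℕ) : Rset k (n + 1) = cons false '' completions k [false] n := by
  ext w
  rcases w with - | ⟨_ | _, w⟩
  · simp [Rset]
  · simp [Rset, completions, and_comm]
  · simp [Rset]

theorem ncard_Rset_succ (k n : ℕ) : (Rset k (n + 1)).ncard = completionCount k n 1 false := by
  rw [Rset_succ, Set.ncard_image_of_injective _ cons_injective, completionCount, replicate_one]

theorem stmt_12_general (k ℓ : ℕ) (hk : 1 ≤ k) (hℓ : 1 ≤ ℓ)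
    (f : ℕ → ℕ)
    (hf1 : ∀ j : ℕ, j < k - 1 → f j = 2 ^ j)
    (hf2 : ∀ j : ℕ, k - 1 ≤ j → f j = ∑ i ∈ Finset.range (k - 1), f (j - 1 - i)) :
    2 * ((Rset k ℓ).ncard : ℤ) =
      f (ℓ - 1) + ((if k ∣ ℓ then 1 else 0) - (if k ∣ ℓ - 1 then 1 else 0)) := by
  obtain ⟨n, rfl⟩ := Nat.exists_eq_add_of_le' hℓ
  have difference := completionCount_false_sub_true (n := n) one_pos hk
  rw [Nat.add_sub_cancel, ncard_Rset_succ, eq_sum_completionCount_of_recurrence hk hf1 hf2,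
    Fintype.sum_bool, ← difference]
  push_cast
  ring

/-- `(f_{ℓ-1}^{(k-1)} - 1)/2 ≤ r_ℓ^{(k)} ≤ (f_{ℓ-1}^{(k-1)} + 1)/2`, i.e.
`|2 r_ℓ^{(k)} - f_{ℓ-1}^{(k-1)}| ≤ 1`. -/
theorem stmt_12 (k ℓ : ℕ) (hk : 3 ≤ k) (hℓ : 1 ≤ ℓ)
    (f : ℕ → ℕ)
    (hf1 : ∀ j : ℕ, j < k - 1 → f j = 2 ^ j)
    (hf2 : ∀ j : ℕ, k - 1 ≤ j → f j = ∑ i ∈ Finset.range (k - 1), f (j - 1 - i)) :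
    |2 * ((Rset k ℓ).ncard : ℤ) - (f (ℓ - 1) : ℤ)| ≤ 1 := by
  rw [stmt_12_general k ℓ (by omega) hℓ f hf1 hf2, add_sub_cancel_left]
  split_ifs <;> norm_num
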